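/- arXiv:2511.13267 — 2 statements merged into one kernel-verified Lean document; each statement's English description precedes it below -/
import Mathlib

section
/- Let K be a field, S = K[x_1,…,x_n], and let I, J ⊆ S be monomial ideals, each having a d-linear resolution, with J ⊆ I. Then for every a ∈ ℕ^n and every i ≥ 0 one has β_{i,a}(J) ≤ β_{i,a}(I), where β_{i,a}(−) = dim_K Tor_i^S(K, −)_a is the multigraded Betti number. In particular, HS_i(J) ⊆ HS_i(I) for all i ≥ 0. -/
/-!
A `d`-linear resolution forces `I` to contain no monomial of degree `< d`: a monomial `x^b ∈ I` of
least degree spans `Tor_0(K, I)_b`, since the first Koszul term vanishes in multidegree `b`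
(`degree_ge_of_linearRes`). Consequently, when `|a| = i + d`, the `(i+1)`-st Koszul term of `I`
vanishes in multidegree `a`, so `Tor_i(K, I)_a` is the full kernel of the Koszul differential in
homological degree `i`. The inclusion `J ⊆ I` embeds the Koszul strand of `J` in that of `I`, hence
embeds the kernel for `J` in the kernel for `I`. When `|a| ≠ i + d` the Betti numbers of `J` vanish.
-/

open MvPolynomial

namespace Paper

noncomputable section

variable (K : Type) [Field K] (n : ℕ)

/-- The polynomial ring `S = K[x_1, …, x_n]`. -/
abbrev S := MvPolynomial (Fin n) K

variable {n}

/-- The squarefree exponent vector of a subset `F ⊆ [n]`. -/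
def expF (F : Finset (Fin n)) : Fin n →₀ ℕ := ∑ j ∈ F, Finsupp.single j 1

variable {K}

/-- Basis of the multidegree-`a` component of the `i`-th term of the Koszul
complex of `x_1, …, x_n` tensored with the ideal `I`:  subsets `F` of
cardinality `i` such that `x^(a - ε_F) ∈ I`. -/
abbrev KB (I : Ideal (S K n)) (a : Fin n →₀ ℕ) (i : ℕ) : Type :=
  {F : Finset (Fin n) // F.card = i ∧ expF F ≤ a ∧
    (monomial (a - expF F) (1 : K) : S K n) ∈ I}

/-- The Koszul differential (in multidegree `a`) from homological degree
`i+1` to `i`. -/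
def kd (I : Ideal (S K n)) (a : Fin n →₀ ℕ) (i : ℕ) :
    (KB I a (i + 1) →₀ K) →ₗ[K] (KB I a i →₀ K) :=
  Finsupp.lsum K fun F =>
    LinearMap.toSpanSingleton K _
      (∑ j ∈ F.1.attach,
        ((-1 : K) ^ ((F.1.filter (fun x => x < j.1)).card)) •
          Finsupp.single
            (⟨F.1.erase j.1, by
              obtain ⟨hcard, hle, hmem⟩ := F.2
              have hj : j.1 ∈ F.1 := j.2
              have herase : expF (F.1.erase j.1) + Finsupp.single j.1 1 = expF F.1 := by
                simpa [expF] using Finset.sum_erase_add F.1 (fun k => Finsupp.single k (1:ℕ)) hj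
              refine ⟨by simp [Finset.card_erase_of_mem hj, hcard], ?_, ?_⟩
              · refine le_trans ?_ hle
                rw [← herase]; exact le_add_of_nonneg_right bot_le
              · have h1 : Finsupp.single j.1 1 ≤ expF F.1 := by
                  rw [← herase]; exact le_add_of_nonneg_left bot_le
                have key : a - expF (F.1.erase j.1) =
                    (a - expF F.1) + Finsupp.single j.1 1 := by
                  have : expF (F.1.erase j.1) = expF F.1 - Finsupp.single j.1 1 := by
                    rw [← herase]; simp
                  rw [this, tsub_tsub_assoc hle h1]
                rw [key]
                have : (monomial ((a - expF F.1) + Finsupp.single j.1 1) (1:K) : S K n)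
                    = (monomial (a - expF F.1) (1:K)) * (monomial (Finsupp.single j.1 1) (1:K)) := by
                  rw [monomial_mul, mul_one]
                rw [this]
                exact Ideal.mul_mem_right _ _ hmem⟩ : KB I a i) (1 : K))

/-- The outgoing Koszul differential from homological degree `i`
(the zero map when `i = 0`). -/
def kdOut (I : Ideal (S K n)) (a : Fin n →₀ ℕ) :
    (i : ℕ) → (KB I a i →₀ K) →ₗ[K] (KB I a (i - 1) →₀ K)
  | 0 => 0
  | (i + 1) => kd I a i

/-- The multidegree-`a` component of `Tor_i^S(K, I)`, computed as the `i`-th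
homology of the multidegree-`a` strand of the Koszul complex tensored
with `I`. -/
abbrev Hmod (I : Ideal (S K n)) (a : Fin n →₀ ℕ) (i : ℕ) :=
  ↥(Submodule.map (Submodule.mkQ (LinearMap.range (kd I a i)))
      (LinearMap.ker (kdOut I a i)))

/-- The `i`-th homological shift ideal `HS_i(I)`, generated by the monomials
`x^a` with `Tor_i^S(K, I)_a ≠ 0`. -/
def HSIdeal (i : ℕ) (I : Ideal (S K n)) : Ideal (S K n) :=
  Ideal.span {p | ∃ a : Fin n →₀ ℕ, Nontrivial (Hmod I a i) ∧ p = monomial a 1}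

/-- `I` is a monomial ideal. -/
def IsMonomialIdeal (I : Ideal (S K n)) : Prop :=
  ∃ A : Set (Fin n →₀ ℕ), I = Ideal.span ((fun a => (monomial a 1 : S K n)) '' A)

/-- `I` has a `d`-linear resolution: `Tor_i^S(K,I)_j = 0` whenever `j ≠ i + d`. -/
def LinearRes (d : ℕ) (I : Ideal (S K n)) : Prop :=
  ∀ (i : ℕ) (a : Fin n →₀ ℕ), (a.sum fun _ e => e) ≠ i + d → Subsingleton (Hmod I a i)

/-- The projective dimension of (a finitely generated multigraded module such
as) `I` over `S`: the largest `i` with `Tor_i^S(K, I) ≠ 0`. -/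
def pdim (I : Ideal (S K n)) : ℕ :=
  sSup {i | ∃ a, Nontrivial (Hmod I a i)}

variable (K n)

/-- The graded maximal ideal `𝔪 = (x_1, …, x_n)`. -/
def maxIdl : Ideal (S K n) := Ideal.span (Set.range X)

/-- The `i`-th squarefree power `𝔪^{[i]} = (x_F : F ⊆ [n], |F| = i)`. -/
def sqPow (i : ℕ) : Ideal (S K n) :=
  Ideal.span {p | ∃ F : Finset (Fin n), F.card = i ∧ p = monomial (expF F) 1}

/-- The exponent vector of `α = x_1⋯x_n`. -/
def aexp : Fin n →₀ ℕ := expF (Finset.univ : Finset (Fin n))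

/-- The edge ideal `I(G)` of a graph `G` on `[n]`. -/
def edgeIdeal (G : SimpleGraph (Fin n)) : Ideal (S K n) :=
  Ideal.span {p | ∃ i j, G.Adj i j ∧ p = X i * X j}

/-- The complementary edge ideal `I_c(G)` of a graph `G` on `[n]`. -/
def compIdeal (G : SimpleGraph (Fin n)) : Ideal (S K n) :=
  Ideal.span {p | ∃ i j, G.Adj i j ∧
    p = monomial (aexp n - Finsupp.single i 1 - Finsupp.single j 1) 1}


variable {K} {n}

end

/-- Inclusion of Koszul basis elements induced by `J ≤ I`. -/
def KB.incl {K : Type} [Field K] {n : ℕ} {I J : Ideal (S K n)} (h : J ≤ I)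
    (a : Fin n →₀ ℕ) (i : ℕ) (F : KB J a i) : KB I a i :=
  ⟨F.1, F.2.1, F.2.2.1, h F.2.2.2⟩

theorem KB.incl_injective {K : Type} [Field K] {n : ℕ} {I J : Ideal (S K n)} (h : J ≤ I)
    (a : Fin n →₀ ℕ) (i : ℕ) : Function.Injective (KB.incl h a i) := fun F G hFG => by
  apply Subtype.ext
  exact congrArg (fun F : KB I a i => F.1) hFG

/-- The Koszul strands of `J ≤ I` form a commuting square. -/
theorem kd_incl {K : Type} [Field K] {n : ℕ} {I J : Ideal (S K n)} (h : J ≤ I)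
    (a : Fin n →₀ ℕ) (i : ℕ) (x : KB J a (i + 1) →₀ K) :
    kd I a i (Finsupp.lmapDomain K K (KB.incl h a (i + 1)) x) =
      Finsupp.lmapDomain K K (KB.incl h a i) (kd J a i x) := by
  induction x using Finsupp.induction_linear with
  | zero => simp
  | add f g hf hg => simp only [map_add, hf, hg]
  | single F c =>
    simp only [kd, Finsupp.lmapDomain_apply, Finsupp.mapDomain_single, Finsupp.lsum_single,
      LinearMap.toSpanSingleton_apply, Finsupp.mapDomain_smul, Finsupp.mapDomain_finsetSum]
    rfl

theorem kdOut_incl {K : Type} [Field K] {n : ℕ} {I J : Ideal (S K n)} (h : J ≤ I)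
    (a : Fin n →₀ ℕ) (i : ℕ) (x : KB J a i →₀ K) :
    kdOut I a i (Finsupp.lmapDomain K K (KB.incl h a i) x) =
      Finsupp.lmapDomain K K (KB.incl h a (i - 1)) (kdOut J a i x) := by
  cases i with
  | zero => simp [kdOut]
  | succ i => exact kd_incl h a i x

theorem degree_expF {n : ℕ} (F : Finset (Fin n)) : (expF F).degree = F.card := by
  simp [expF, map_sum]

theorem range_kd_eq_bot {K : Type} [Field K] {n : ℕ} (I : Ideal (S K n)) (a : Fin n →₀ ℕ) (i : ℕ)
    (h : IsEmpty (KB I a (i + 1))) : LinearMap.range (kd I a i) = ⊥ := by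
  rw [LinearMap.range_eq_bot]
  exact Subsingleton.elim _ _

/-- `Tor_i(K, I)_a` is the whole kernel when the next Koszul term vanishes. -/
theorem rank_Hmod_of_isEmpty {K : Type} [Field K] {n : ℕ} (I : Ideal (S K n)) (a : Fin n →₀ ℕ)
    (i : ℕ) (h : IsEmpty (KB I a (i + 1))) :
    Module.rank K (Hmod I a i) = Module.rank K (LinearMap.ker (kdOut I a i)) := by
  refine (LinearEquiv.rank_eq (Submodule.equivMapOfInjective _ ?_ _)).symm
  rw [← LinearMap.ker_eq_bot, Submodule.ker_mkQ, range_kd_eq_bot I a i h]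

theorem degree_ge_of_linearRes {K : Type} [Field K] {n d : ℕ} {I : Ideal (S K n)}
    (hI : LinearRes d I) (b : Fin n →₀ ℕ) (hb : (monomial b (1 : K) : S K n) ∈ I) :
    d ≤ b.degree := by
  induction hm : b.degree using Nat.strong_induction_on generalizing b with
  | _ m ih =>
    by_contra! hlt
    -- A monomial in `I` of smaller degree is excluded by induction, so the first term is zero.
    have hE : IsEmpty (KB I b (0 + 1)) := by
      refine ⟨fun F => ?_⟩
      have hsum : (b - expF F.1).degree + (expF F.1).degree = b.degree := by
        rw [← map_add, tsub_add_cancel_of_le F.2.2.1]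
      rw [degree_expF, F.2.1] at hsum
      have := ih _ (by omega) (b - expF F.1) F.2.2.2 rfl
      omega
    have hsub : Subsingleton (Hmod I b 0) := hI 0 b (by
      change b.degree ≠ 0 + d
      omega)
    have hr := rank_Hmod_of_isEmpty I b 0 hE
    have h0 : Module.rank K (Hmod I b 0) = 0 := rank_subsingleton' K _
    have hker : Subsingleton (LinearMap.ker (kdOut I b 0)) :=
      rank_zero_iff.mp (hr.symm.trans h0)
    let E : KB I b 0 := ⟨∅, by simp, by simp [expF], by simpa [expF] using hb⟩
    have hz := congrArg Subtype.val (Subsingleton.elim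
      (⟨Finsupp.single E 1, by simp [kdOut]⟩ : LinearMap.ker (kdOut I b 0)) 0)
    simp at hz

/-- If `J ⊆ I` are monomial ideals both with `d`-linear
resolution, then `β_{i,a}(J) ≤ β_{i,a}(I)` for all `i, a`; in particular
`HS_i(J) ⊆ HS_i(I)` for all `i`. -/
theorem betti_le_of_le_of_linearRes
    (K : Type) [Field K] (n d : ℕ) (I J : Ideal (S K n))
    (hI : IsMonomialIdeal I) (hJ : IsMonomialIdeal J)
    (hlinI : LinearRes d I) (hlinJ : LinearRes d J) (hJI : J ≤ I) :
    (∀ (i : ℕ) (a : Fin n →₀ ℕ),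
      Module.rank K (Hmod J a i) ≤ Module.rank K (Hmod I a i)) ∧
    (∀ i : ℕ, HSIdeal i J ≤ HSIdeal i I) := by
  have hrank : ∀ (i : ℕ) (a : Fin n →₀ ℕ),
      Module.rank K (Hmod J a i) ≤ Module.rank K (Hmod I a i) := by
    intro i a
    by_cases ha : a.degree = i + d
    · have hE : IsEmpty (KB I a (i + 1)) := by
        refine ⟨fun F => ?_⟩
        have hsum : (a - expF F.1).degree + (expF F.1).degree = a.degree := by
          rw [← map_add, tsub_add_cancel_of_le F.2.2.1]
        rw [degree_expF, F.2.1] at hsum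
        have := degree_ge_of_linearRes hlinI _ F.2.2.2
        omega
      rw [rank_Hmod_of_isEmpty I a i hE]
      refine (rank_map_le _ _).trans ?_
      let f := (Finsupp.lmapDomain K K (KB.incl hJI a i)).restrict
        (p := LinearMap.ker (kdOut J a i)) (q := LinearMap.ker (kdOut I a i)) (by
          intro x hx
          rw [LinearMap.mem_ker] at hx ⊢
          rw [kdOut_incl, hx, map_zero])
      refine LinearMap.rank_le_of_injective f fun x y hxy => ?_
      apply Subtype.ext
      exact Finsupp.mapDomain_injective (KB.incl_injective hJI a i) (congrArg Subtype.val hxy)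
    · have := hlinJ i a ha
      rw [rank_subsingleton']
      exact zero_le
  refine ⟨hrank, fun i => Ideal.span_mono ?_⟩
  rintro p ⟨a, ha, rfl⟩
  exact ⟨a, rank_pos_iff_nontrivial.mp ((rank_pos_iff_nontrivial.mpr ha).trans_le (hrank i a)), rfl⟩

end Paper
end

section
/- Let G be a finite simple connected graph, let H be a connected subgraph of G, and set u = ∏_{i ∈ V(G)\V(H)} x_i. Then for all i ≥ 1 and s ≥ 1 one has u^s · HS_i(I_c(H)^s) ⊆ HS_i(I_c(G)^s). In particular, pd(I_c(H)^s) ≤ pd(I_c(G)^s) for all s ≥ 1. -/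
/-!
The multidegree `a` part of `Tor_i(K, I)` is the homology of a complex of vector spaces on the sets
`F` with `|F| = i` and `x^(a - F) ∈ I`. Write `J = I_c(H)^s`, `I = I_c(G)^s` and let `u` be the
product of the variables outside `V(H)`. Multiplication by `u^s` carries `J` into `I`
(`monomial_shift_mem`), hence Koszul cycles of `J` in multidegree `a` to cycles of `I` in
multidegree `a + deg u^s`, with the same coefficients. If the ideal `J` has a linear resolution,
a class in `Tor_i(K, J)_a` forces `|a| = i + (|V(H)| - 2) s`. The shifted multidegree then has total
degree `i + (n - 2) s`, and since `I` is generated in degree `(n - 2) s`, its Koszul complex is zero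
there in homological degree `i + 1`. So a nonzero cycle is not a boundary (`nontrivial_of_shift`),
and `Tor_i(K, I)` is nonzero in the shifted multidegree (`nontrivial_subgraph`). Both claims of the
theorem follow; only the linearity for `H` is needed.

The linearity (`linear_of_nontrivial`) comes from linear quotients. A generator of `J` is
`x_{V(H)}^s` divided by a product of `s` edges, so it is recorded by a multiset `α` of edges through
its degree vector `dg α`. The edges are ordered by their distance from a root vertex, which makes
each edge but the first meet an earlier one (`exists_lower`). Each degree vector is represented by
its lexicographically largest multiset (`Std`, `exists_std`), and the generators are ordered
lexicographically. The exchange property `improves_of_better` says that if `γ` is larger than such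
an `α`, then a larger multiset has degree vector `dg α - e_i + e_j` with `dg γ i < dg α i`. It is
proved with trails alternating between edges of `α` and edges of `γ`: the trail through the lowest
edge where they differ either yields the exchange or gets stuck, and in the second case it is
removed and the argument repeated, an edge of `α` that is the lowest one remaining being traded for
an earlier edge that meets it.

Given the exchange property, the Koszul complex in a fixed multidegree is filtered by the
generators, taken in decreasing order. Each step adds either a cone, which does not matter for
homology (`Acyc.of_cone`), or a single set, whose size is the one allowed by linearity
(`acyc_cx`, `acyc_sums`).
-/

open MvPolynomial

namespace Paper

noncomputable section

variable (K : Type) [Field K] (n : ℕ)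

variable {n}

variable {K}

variable (K n)

variable {K} {n}

/-- The complementary edge ideal of a subgraph `H` with vertex set `VH`:
`I_c(H) = (x_{V(H)}/(x_i x_j) : {i,j} ∈ E(H))`. -/
def compIdealOn (VH : Finset (Fin n)) (H : SimpleGraph (Fin n)) : Ideal (S K n) :=
  Ideal.span {p | ∃ i j, H.Adj i j ∧
    p = monomial (expF VH - Finsupp.single i 1 - Finsupp.single j 1) 1}

end


/-! ### Multisets of edges and alternating rays -/

section Exchange

set_option linter.unusedSectionVars false

variable {ι V : Type} [Fintype ι] [Fintype V] [DecidableEq V] (x y : ι → V)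

/-- The unit vector at the vertex `v`. -/
def ev (v : V) : V → ℤ := Pi.single v 1

/-- The degree vector of the multiset of edges in which the edge `{x f, y f}` has
multiplicity `α f`. -/
def dg (α : ι → ℕ) : V → ℤ := ∑ f, (α f : ℤ) • (ev (x f) + ev (y f))

lemma ev_self (v : V) : ev v v = 1 := by simp [ev]

lemma ev_ne {v u : V} (h : u ≠ v) : ev v u = 0 := by simp [ev, h]

lemma ev_nonneg (v u : V) : 0 ≤ ev v u := by
  by_cases h : u = v
  · subst h; simp [ev_self]
  · simp [ev_ne h]

lemma dg_add (α β : ι → ℕ) : dg x y (α + β) = dg x y α + dg x y β := by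
  simp only [dg, Pi.add_apply, Nat.cast_add, add_smul, Finset.sum_add_distrib]

lemma dg_sub {α β : ι → ℕ} (h : β ≤ α) : dg x y (α - β) = dg x y α - dg x y β := by
  rw [eq_sub_iff_add_eq, ← dg_add, tsub_add_cancel_of_le h]

lemma dg_apply (α : ι → ℕ) (v : V) :
    dg x y α v = ∑ f, (α f : ℤ) * (ev (x f) v + ev (y f) v) := by
  simp only [dg, Finset.sum_apply, Pi.smul_apply, Pi.add_apply, smul_eq_mul]

lemma dg_nonneg (α : ι → ℕ) (v : V) : 0 ≤ dg x y α v := by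
  rw [dg_apply]
  exact Finset.sum_nonneg fun f _ =>
    mul_nonneg (by positivity) (add_nonneg (ev_nonneg _ _) (ev_nonneg _ _))

lemma dg_mono {α β : ι → ℕ} (h : α ≤ β) (v : V) : dg x y α v ≤ dg x y β v := by
  rw [← sub_nonneg, ← Pi.sub_apply, ← dg_sub x y h]
  exact dg_nonneg _ _ _ _

lemma sum_ev (v : V) : ∑ u, ev v u = 1 := by simp [ev]

lemma sum_dg (α : ι → ℕ) : ∑ v, dg x y α v = 2 * ((∑ f, α f : ℕ) : ℤ) := by
  simp only [dg_apply]
  rw [Finset.sum_comm]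
  simp only [← Finset.mul_sum, Finset.sum_add_distrib, sum_ev]
  push_cast
  rw [← Finset.sum_mul]; ring

variable [LinearOrder ι]

/-- `B` is lexicographically larger than `A`: at the first edge where the multiplicities
differ, `B` has the larger one. -/
def Better (A B : ι → ℕ) : Prop := ∃ k, (∀ l < k, A l = B l) ∧ A k < B k

/-- No part of `α` can be traded for a lexicographically larger multiset with the same
degrees; equivalently, `α` is lexicographically largest in its fibre under `dg`. -/
def Std (α : ι → ℕ) : Prop := ∀ A ≤ α, ∀ B, dg x y A = dg x y B → ¬ Better A B

/-- A part `A` of `α` can be traded for a lexicographically larger `B`, changing the degree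
vector by `- ev i + ev j`, where `i` is a vertex at which `α` has larger degree than `γ`. -/
def Improves (α γ : ι → ℕ) : Prop :=
  ∃ A ≤ α, ∃ B, ∃ i j, Better A B ∧ dg x y A - dg x y B = ev i - ev j ∧
    dg x y γ i < dg x y α i

lemma dg_single (f : ι) : dg x y (Pi.single f 1) = ev (x f) + ev (y f) := by
  unfold dg
  rw [Finset.sum_eq_single f]
  · simp
  · intro b _ hb; simp [hb]
  · simp

lemma sum_add_single (B : ι → ℕ) (f : ι) : ∑ g, (B + Pi.single f 1 : ι → ℕ) g = ∑ g, B g + 1 := by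
  simp [Finset.sum_add_distrib]

lemma add_single_le {B γ : ι → ℕ} (h : B ≤ γ) {f : ι} (hf : B f < γ f) :
    B + Pi.single f 1 ≤ γ := by
  intro g
  by_cases hg : g = f
  · subst hg; simpa using hf
  · simpa [hg] using h g

/-- If every edge at `v` occurs in `B` as often as in `γ`, the degrees at `v` agree; otherwise
there is an edge `{v, u}` that can be added to `B` within `γ`. -/
lemma exhausted_or_edge {B γ : ι → ℕ} (h : B ≤ γ) (v : V) :
    dg x y γ v = dg x y B v ∨
      ∃ f u, B + Pi.single f 1 ≤ γ ∧ dg x y (Pi.single f 1) = ev v + ev u := by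
  by_cases hex : ∃ f, B f < γ f ∧ (x f = v ∨ y f = v)
  · obtain ⟨f, hf, hv | hv⟩ := hex
    · exact Or.inr ⟨f, y f, add_single_le h hf, by rw [dg_single, hv]⟩
    · exact Or.inr ⟨f, x f, add_single_le h hf, by rw [dg_single, hv, add_comm]⟩
  · left
    push Not at hex
    rw [dg_apply, dg_apply]
    refine Finset.sum_congr rfl fun f _ => ?_
    rcases (h f).lt_or_eq with hlt | heq
    · obtain ⟨h1, h2⟩ := hex f hlt
      rw [ev_ne h1.symm, ev_ne h2.symm]; simp
    · rw [heq]

/-- Extension of an alternating ray with one loose end. The pair `(A, B)` stands for the edges of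
`α` and of `γ` used so far, `c` for the contribution of the fixed end and `± ev v` for that of
the loose end. The ray is extended until no unused edge of the required colour remains there. -/
lemma ray (α γ : ι → ℕ) (c : V → ℤ) (N : ℕ) : ∀ (A B : ι → ℕ) (v : V), A ≤ α → B ≤ γ →
    ∑ f, α f + ∑ f, γ f ≤ ∑ f, A f + ∑ f, B f + N →
    (dg x y A - dg x y B = c + ev v ∨ dg x y A - dg x y B = c - ev v) →
    ∃ A' B' u, A ≤ A' ∧ A' ≤ α ∧ B ≤ B' ∧ B' ≤ γ ∧
      ((dg x y A' - dg x y B' = c + ev u ∧ dg x y γ u = dg x y B' u) ∨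
        (dg x y A' - dg x y B' = c - ev u ∧ dg x y α u = dg x y A' u)) := by
  induction N with
  | zero =>
    intro A B v hA hB hN hc
    have hA' : ∀ f, ¬ A + Pi.single f 1 ≤ α := fun f hf => by
      have h1 := Finset.sum_le_sum fun g (_ : g ∈ Finset.univ) => hf g
      have h2 := Finset.sum_le_sum fun g (_ : g ∈ Finset.univ) => hB g
      rw [sum_add_single] at h1; omega
    have hB' : ∀ f, ¬ B + Pi.single f 1 ≤ γ := fun f hf => by
      have h1 := Finset.sum_le_sum fun g (_ : g ∈ Finset.univ) => hf g
      have h2 := Finset.sum_le_sum fun g (_ : g ∈ Finset.univ) => hA g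
      rw [sum_add_single] at h1; omega
    refine ⟨A, B, v, le_rfl, hA, le_rfl, hB, ?_⟩
    rcases hc with hc | hc
    · rcases exhausted_or_edge x y hB v with h | ⟨f, u, h, _⟩
      · exact Or.inl ⟨hc, h⟩
      · exact absurd h (hB' f)
    · rcases exhausted_or_edge x y hA v with h | ⟨f, u, h, _⟩
      · exact Or.inr ⟨hc, h⟩
      · exact absurd h (hA' f)
  | succ N ih =>
    intro A B v hA hB hN hc
    rcases hc with hc | hc
    · rcases exhausted_or_edge x y hB v with h | ⟨f, u, h, hd⟩
      · exact ⟨A, B, v, le_rfl, hA, le_rfl, hB, Or.inl ⟨hc, h⟩⟩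
      · obtain ⟨A', B', w, h1, h2, h3, h4, h5⟩ := ih A (B + Pi.single f 1) u hA h
          (by rw [sum_add_single]; omega)
          (Or.inr (by rw [dg_add, hd, ← sub_sub, hc]; abel))
        exact ⟨A', B', w, h1, h2, le_trans (by simp) h3, h4, h5⟩
    · rcases exhausted_or_edge x y hA v with h | ⟨f, u, h, hd⟩
      · exact ⟨A, B, v, le_rfl, hA, le_rfl, hB, Or.inr ⟨hc, h⟩⟩
      · obtain ⟨A', B', w, h1, h2, h3, h4, h5⟩ := ih (A + Pi.single f 1) B u h hB
          (by rw [sum_add_single]; omega)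
          (Or.inl (by rw [dg_add, hd, add_sub_right_comm, hc]; abel))
        exact ⟨A', B', w, le_trans (by simp) h1, h2, h3, h4, h5⟩

/-- Let `f` be an edge below which `α` and `γ` vanish. An alternating ray that already contains
`f` as an edge of `γ` and has a deficit at its fixed end `p` either gives an improvement or gets
stuck with a deficit at a vertex where no unused edge of `α` is left. -/
lemma ray_from_low {α γ : ι → ℕ} {f : ι} (hdisj : ∀ f, α f = 0 ∨ γ f = 0)
    (hlow : ∀ l < f, α l = 0 ∧ γ l = 0) (hstd : Std x y α)
    {A B : ι → ℕ} (hA : A ≤ α) (hB : B ≤ γ) (hBf : 0 < B f) {p q : V}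
    (hd : dg x y A - dg x y B = - ev p - ev q) :
    Improves x y α γ ∨ ∃ A' B' u, A ≤ A' ∧ A' ≤ α ∧ B ≤ B' ∧ B' ≤ γ ∧
      dg x y A' - dg x y B' = - ev p - ev u ∧ dg x y α u = dg x y A' u := by
  obtain ⟨A', B', u, h1, h2, h3, h4, h5⟩ :=
    ray x y α γ (- ev p) (∑ f, α f + ∑ f, γ f) A B q hA hB (by omega) (Or.inr hd)
  rcases h5 with ⟨h5, h6⟩ | h5
  swap
  · exact Or.inr ⟨A', B', u, h1, h2, h3, h4, h5⟩
  left
  have hb : Better A' B' := by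
    have hB'f : 0 < B' f := lt_of_lt_of_le hBf (h3 f)
    refine ⟨f, fun l hl => ?_, ?_⟩
    · have := hlow l hl
      have : A' l ≤ α l := h2 l
      have : B' l ≤ γ l := h4 l
      omega
    · have := hdisj f
      have : A' f ≤ α f := h2 f
      have : B' f ≤ γ f := h4 f
      omega
  by_cases hup : u = p
  · subst hup
    exact absurd hb (hstd A' h2 B' (sub_eq_zero.1 (by rw [h5]; abel)))
  · refine ⟨A', h2, B', u, p, hb, by rw [h5]; abel, ?_⟩
    have h7 := congrFun h5 u
    simp only [Pi.sub_apply, Pi.add_apply, Pi.neg_apply, ev_self, ev_ne hup] at h7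
    have := dg_mono x y h2 u
    omega

/-- The alternating trail through the lowest edge `f`, an edge of `γ`, either gives an improvement
or is stuck at both ends; removing it in the second case creates no new vertex at which `α`
exceeds `γ`. -/
lemma improves_or_remove {α γ : ι → ℕ} {f : ι} (hdisj : ∀ f, α f = 0 ∨ γ f = 0)
    (hlow : ∀ l < f, α l = 0 ∧ γ l = 0) (hf : 0 < γ f) (hstd : Std x y α) :
    Improves x y α γ ∨ ∃ A ≤ α, ∃ B ≤ γ, 0 < B f ∧ ∑ g, A g + 1 = ∑ g, B g ∧
      ∀ i, dg x y (γ - B) i < dg x y (α - A) i → dg x y γ i < dg x y α i := by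
  have hB0 : (Pi.single f 1 : ι → ℕ) ≤ γ := by
    simpa using add_single_le (B := 0) (γ := γ) (by intro g; simp) (f := f) (by simpa using hf)
  rcases ray_from_low x y (A := 0) (B := Pi.single f 1) (p := x f) (q := y f)
    hdisj hlow hstd (by intro g; simp) hB0 (by simp)
    (by rw [dg_single]; simp [dg]; abel) with h | ⟨A, B, u, -, hA, hB1, hB, hd, hu⟩
  · exact Or.inl h
  have hBf : 0 < B f := lt_of_lt_of_le (by simp) (hB1 f)
  rcases ray_from_low x y (A := A) (B := B) (p := u) (q := x f)
    hdisj hlow hstd hA hB hBf (by rw [hd]; abel) with h | ⟨A', B', w, hAA, hA', hBB, hB', hd', hw⟩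
  · exact Or.inl h
  refine Or.inr ⟨A', hA', B', hB', lt_of_lt_of_le hBf (hBB f), ?_, ?_⟩
  · have h := congrArg (fun z : V → ℤ => ∑ v, z v) hd'
    simp only [Pi.sub_apply, Pi.neg_apply, Finset.sum_sub_distrib, Finset.sum_neg_distrib, sum_dg,
      sum_ev] at h
    omega
  · intro i hi
    rw [dg_sub x y hA', dg_sub x y hB', Pi.sub_apply, Pi.sub_apply] at hi
    have h1 := congrFun hd' i
    have h2 := dg_mono x y hB' i
    have hiu : i ≠ u := by
      rintro rfl
      have := dg_mono x y hAA i
      have := dg_mono x y hA' i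
      omega
    have hiw : i ≠ w := by
      rintro rfl
      omega
    simp only [Pi.sub_apply, Pi.neg_apply, ev_ne hiu, ev_ne hiw] at h1
    omega

lemma Std.mono {α β : ι → ℕ} (h : β ≤ α) (hα : Std x y α) : Std x y β :=
  fun A hA => hα A (hA.trans h)

lemma Improves.of_sub {α γ A B : ι → ℕ} (h : Improves x y (α - A) (γ - B))
    (himp : ∀ i, dg x y (γ - B) i < dg x y (α - A) i → dg x y γ i < dg x y α i) :
    Improves x y α γ := by
  obtain ⟨A', hA', B', i, j, hb, hd, hi⟩ := h
  exact ⟨A', hA'.trans tsub_le_self, B', i, j, hb, hd, himp i hi⟩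

lemma sum_sub {α A : ι → ℕ} (h : A ≤ α) : ∑ g, (α - A) g + ∑ g, A g = ∑ g, α g := by
  rw [← Finset.sum_add_distrib]
  exact Finset.sum_congr rfl fun g _ => Nat.sub_add_cancel (h g)

/-- If `α` has more edges than `γ` and each edge `{p, q}` of `α` meets an earlier edge `{p, r}`,
then `α` can be improved. The argument is by induction on the number of edges: stuck alternating
trails through the lowest edge are removed. -/
lemma improves_of_card_lt (N : ℕ) : ∀ (α γ : ι → ℕ), ∑ g, α g + ∑ g, γ g ≤ N →
    (∀ f, α f = 0 ∨ γ f = 0) → ∑ g, γ g < ∑ g, α g → Std x y α →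
    (∀ f, 0 < α f → ∃ g < f, ∃ p q r, dg x y (Pi.single f 1) = ev p + ev q ∧
      dg x y (Pi.single g 1) = ev p + ev r) →
    Improves x y α γ := by
  induction N with
  | zero => intro α γ hN _ hlt; omega
  | succ N ih =>
    intro α γ hN hdisj hlt hstd hlow
    have hrec : ∀ A ≤ α, ∀ B ≤ γ, 0 < ∑ g, A g + ∑ g, B g → ∑ g, A g ≤ ∑ g, B g →
        (∀ i, dg x y (γ - B) i < dg x y (α - A) i → dg x y γ i < dg x y α i) →
        Improves x y α γ := by
      intro A hA B hB hpos hle himp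
      refine Improves.of_sub x y (ih (α - A) (γ - B) ?_ ?_ ?_ (hstd.mono x y tsub_le_self) ?_) himp
      · have := sum_sub hA; have := sum_sub hB; omega
      · intro f
        have := hdisj f
        simp only [Pi.sub_apply]; omega
      · have := sum_sub hA; have := sum_sub hB; omega
      · intro f hf
        exact hlow f (lt_of_lt_of_le hf (by simp))
    have hne : (Finset.univ.filter fun f => 0 < α f + γ f).Nonempty := by
      by_contra hcon
      rw [Finset.not_nonempty_iff_eq_empty, Finset.filter_eq_empty_iff] at hcon
      have : ∑ g, α g = 0 := Finset.sum_eq_zero fun g hg => by have := hcon hg; omega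
      omega
    obtain ⟨f, hf, hmin⟩ := Finset.exists_min_image _ id hne
    have hmin' : ∀ l < f, α l = 0 ∧ γ l = 0 := by
      intro l hl
      by_contra hcon
      have := hmin l (by simp; omega)
      exact absurd hl (not_lt.2 this)
    simp only [Finset.mem_filter, Finset.mem_univ, true_and] at hf
    by_cases hγf : 0 < γ f
    · rcases improves_or_remove x y hdisj hmin' hγf hstd with h | ⟨A, hA, B, hB, hBf, hs, himp⟩
      · exact h
      · exact hrec A hA B hB (by omega) (by omega) himp
    · have hαf : 0 < α f := by omega
      obtain ⟨g, hgf, p, q, r, hfd, hgd⟩ := hlow f hαf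
      have hA0 : (Pi.single f 1 : ι → ℕ) ≤ α := by
        simpa using add_single_le (B := 0) (γ := α) (by intro g; simp) (f := f) (by simpa using hαf)
      obtain ⟨A, B, u, hfA, hA, -, hB, h⟩ := ray x y α γ (ev p) (∑ f, α f + ∑ f, γ f)
        (Pi.single f 1) 0 q hA0 (by intro g; simp) (by omega) (Or.inl (by rw [hfd]; simp [dg]))
      rcases h with ⟨hd, hu⟩ | ⟨hd, hu⟩
      · -- adding the earlier edge `{p, r}` to `B` cancels the fixed end `p`
        refine ⟨A, hA, B + Pi.single g 1, u, r, ⟨g, fun l hl => ?_, ?_⟩, ?_, ?_⟩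
        · have := hmin' l (hl.trans hgf)
          have : A l ≤ α l := hA l
          have : B l ≤ γ l := hB l
          simp only [Pi.add_apply, Pi.single_apply, hl.ne, if_false]; omega
        · have := hmin' g hgf
          have : A g ≤ α g := hA g
          simp only [Pi.add_apply, Pi.single_apply, if_true]; omega
        · rw [dg_add, hgd, ← sub_sub, hd]; abel
        · have h1 := congrFun hd u
          simp only [Pi.sub_apply, Pi.add_apply, ev_self] at h1
          have := dg_mono x y hA u
          have := ev_nonneg p u
          omega
      · have hs := congrArg (fun z : V → ℤ => ∑ v, z v) hd
        simp only [Pi.sub_apply, Finset.sum_sub_distrib, sum_dg, sum_ev] at hs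
        have hApos : 0 < ∑ g, A g := by
          refine Finset.sum_pos' (fun _ _ => Nat.zero_le _) ⟨f, Finset.mem_univ _, ?_⟩
          exact lt_of_lt_of_le (by simp) (hfA f)
        refine hrec A hA B hB (by omega) (by omega) fun i hi => ?_
        rw [dg_sub x y hA, dg_sub x y hB, Pi.sub_apply, Pi.sub_apply] at hi
        have h1 := congrFun hd i
        have h2 := dg_mono x y hB i
        have hiu : i ≠ u := by
          rintro rfl
          omega
        have := ev_nonneg p i
        simp only [Pi.sub_apply, ev_ne hiu] at h1
        omega

/-- The exchange property: a lexicographically largest `α` of its fibre can be improved in the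
direction of any lexicographically larger `γ` with the same number of edges. -/
lemma improves_of_better {α γ : ι → ℕ} (hs : ∑ g, α g = ∑ g, γ g) (hb : Better α γ)
    (hstd : Std x y α)
    (hlow : ∀ f f₀ : ι, f₀ < f → ∃ g < f, ∃ p q r, dg x y (Pi.single f 1) = ev p + ev q ∧
      dg x y (Pi.single g 1) = ev p + ev r) :
    Improves x y α γ := by
  obtain ⟨f, hfl, hff⟩ := hb
  -- cancel the common part `μ` of `α` and `γ`
  set μ : ι → ℕ := α ⊓ γ with hμ
  have hμα : μ ≤ α := inf_le_left
  have hμγ : μ ≤ γ := inf_le_right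
  have hval : ∀ g, μ g = min (α g) (γ g) := fun g => rfl
  have hdisj : ∀ g, (α - μ) g = 0 ∨ (γ - μ) g = 0 := by
    intro g; have := hval g; simp only [Pi.sub_apply]; omega
  have hmin : ∀ l < f, (α - μ) l = 0 ∧ (γ - μ) l = 0 := by
    intro l hl; have := hval l; have := hfl l hl; simp only [Pi.sub_apply]; omega
  have hαf : (α - μ) f = 0 := by
    have := hval f; simp only [Pi.sub_apply]; omega
  have hγf : 0 < (γ - μ) f := by
    have := hval f; simp only [Pi.sub_apply]; omega
  have hstd' : Std x y (α - μ) := hstd.mono x y tsub_le_self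
  refine Improves.of_sub x y (A := μ) (B := μ) ?_ fun i hi => ?_
  swap
  · rw [dg_sub x y hμα, dg_sub x y hμγ, Pi.sub_apply, Pi.sub_apply] at hi; omega
  rcases improves_or_remove x y hdisj hmin hγf hstd' with h | ⟨A, hA, B, hB, hBf, hsz, himp⟩
  · exact h
  refine Improves.of_sub x y (A := A) (B := B)
    (improves_of_card_lt x y _ _ _ le_rfl ?_ ?_ (hstd'.mono x y tsub_le_self) ?_) himp
  · intro g
    have := hdisj g
    rw [Pi.sub_apply, Pi.sub_apply (γ - μ)]; omega
  · have := sum_sub hA; have := sum_sub hB; have := sum_sub hμα; have := sum_sub hμγ; omega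
  · intro l hl
    have hl' : 0 < (α - μ) l := lt_of_lt_of_le hl (by rw [Pi.sub_apply]; omega)
    refine hlow l f (lt_of_not_ge fun hle => ?_)
    rcases hle.lt_or_eq with h | h
    · have := (hmin l h).1; omega
    · subst h; omega

end Exchange

/-! ### The Koszul differential on functions of subsets -/

section Koszul

set_option linter.unusedSectionVars false

variable {K : Type} [Field K] {n : ℕ}

/-- The Koszul sign of adding `j` to `F`. -/
def sg (K : Type) [Field K] (F : Finset (Fin n)) (j : Fin n) : K :=
  (-1) ^ (F.filter (fun x => x < j)).card

/-- The Koszul differential on chains, regarded as `K`-valued functions on all subsets. -/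
def bd (z : Finset (Fin n) → K) : Finset (Fin n) → K :=
  fun F => ∑ j ∈ Fᶜ, sg K F j * z (insert j F)

/-- The cone operator with apex `u`, a contracting homotopy for `bd`. -/
def cone (u : Fin n) (z : Finset (Fin n) → K) : Finset (Fin n) → K :=
  fun F => if u ∈ F then sg K F u * z (F.erase u) else 0

lemma sg_mul_self (F : Finset (Fin n)) (j : Fin n) : sg K F j * sg K F j = 1 := by
  rw [sg, ← mul_pow]; simp

lemma sg_insert_of_lt {F : Finset (Fin n)} {j u : Fin n} (hj : j ∉ F) (h : j < u) :
    sg K (insert j F) u = - sg K F u := by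
  rw [sg, sg, Finset.filter_insert, if_pos h, Finset.card_insert_of_notMem (by simp [hj]), pow_succ]
  ring

lemma sg_insert_of_not_lt {F : Finset (Fin n)} {j u : Fin n} (h : ¬ j < u) :
    sg K (insert j F) u = sg K F u := by
  rw [sg, sg, Finset.filter_insert, if_neg h]

lemma sg_swap {E : Finset (Fin n)} {j u : Fin n} (hj : j ∉ E) (hu : u ∉ E) (hju : j ≠ u) :
    sg K E j * sg K (insert j E) u = - (sg K E u * sg K (insert u E) j) := by
  rcases lt_or_gt_of_ne hju with h | h
  · rw [sg_insert_of_lt hj h, sg_insert_of_not_lt h.asymm]; ring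
  · rw [sg_insert_of_lt hu h, sg_insert_of_not_lt h.asymm]; ring

lemma bd_bd (z : Finset (Fin n) → K) : bd (bd z) = 0 := by
  funext F
  simp only [bd, Finset.mul_sum, Pi.zero_apply]
  rw [Finset.sum_sigma']
  refine Finset.sum_involution (fun p _ => ⟨p.2, p.1⟩) ?_ ?_ ?_ ?_
  · rintro ⟨j, k⟩ hp
    simp only [Finset.mem_sigma, Finset.mem_compl, Finset.mem_insert, not_or] at hp
    obtain ⟨hj, hkj, hk⟩ := hp
    simp only
    rw [← mul_assoc, ← mul_assoc, sg_swap hj hk (Ne.symm hkj), Finset.insert_comm]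
    ring
  · rintro ⟨j, k⟩ hp _ heq
    simp only [Finset.mem_sigma, Finset.mem_compl, Finset.mem_insert, not_or] at hp
    simp only [Sigma.mk.injEq, heq_eq_eq] at heq
    exact hp.2.1 heq.1
  · rintro ⟨j, k⟩ hp
    simp only [Finset.mem_sigma, Finset.mem_compl, Finset.mem_insert, not_or] at hp ⊢
    exact ⟨hp.2.2, Ne.symm hp.2.1, hp.1⟩
  · rintro ⟨j, k⟩ hp
    rfl

lemma bd_cone (u : Fin n) (z : Finset (Fin n) → K) (F : Finset (Fin n)) :
    bd (cone u z) F + cone u (bd z) F = z F := by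
  by_cases hu : u ∈ F
  · obtain ⟨E, hE, rfl⟩ : ∃ E, u ∉ E ∧ insert u E = F :=
      ⟨F.erase u, Finset.notMem_erase _ _, Finset.insert_erase hu⟩
    have hc : Eᶜ = insert u (insert u E)ᶜ := by
      ext v; simp only [Finset.mem_compl, Finset.mem_insert, not_or]
      by_cases hv : v = u
      · subst hv; simp [hE]
      · simp [hv]
    have h1 : cone u (bd z) (insert u E) = sg K E u * bd z E := by
      simp only [cone, Finset.mem_insert_self, if_true, Finset.erase_insert hE]
      rw [sg_insert_of_not_lt (lt_irrefl _)]
    rw [h1]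
    simp only [bd]
    rw [hc, Finset.sum_insert (by simp), mul_add, ← mul_assoc, sg_mul_self, one_mul, Finset.mul_sum,
      add_left_comm, ← Finset.sum_add_distrib]
    refine add_eq_left.2 (Finset.sum_eq_zero fun j hj => ?_)
    simp only [Finset.mem_compl, Finset.mem_insert, not_or] at hj
    obtain ⟨hju, hjE⟩ := hj
    have h2 : (insert j (insert u E)).erase u = insert j E := by
      rw [Finset.insert_comm, Finset.erase_insert (by simp [Ne.symm hju, hE])]
    have h3 : sg K (insert j (insert u E)) u = sg K (insert j E) u := by
      rw [Finset.insert_comm, sg_insert_of_not_lt (lt_irrefl _)]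
    simp only [cone, Finset.mem_insert, true_or, or_true, if_true, h2, h3]
    have h4 := sg_swap (K := K) hjE hE hju
    have h5 := sg_mul_self (K := K) E u
    have h6 := sg_mul_self (K := K) E j
    have h7 : sg K (insert u E) j * sg K (insert j E) u = - (sg K E u * sg K E j) := by
      linear_combination (sg K E j * sg K (insert u E) j) * h4
        - (sg K (insert u E) j * sg K (insert j E) u) * h6
        - sg K E u * sg K E j * sg_mul_self (K := K) (insert u E) j
    linear_combination z (insert j E) * h7
  · have h1 : cone u (bd z) F = 0 := by simp [cone, hu]
    rw [h1, add_zero]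
    simp only [bd]
    rw [Finset.sum_eq_single u]
    · simp only [cone, Finset.mem_insert_self, if_true, Finset.erase_insert hu]
      rw [sg_insert_of_not_lt (lt_irrefl _), ← mul_assoc, sg_mul_self, one_mul]
    · intro j _ hj
      simp [cone, hu, Ne.symm hj]
    · intro h; simp [hu] at h

/-- The chains supported on the family `Δ` of subsets have no homology in degree `i`. Degrees are
cardinalities, so a face of dimension `d` has degree `d + 1`. -/
def Acyc (K : Type) [Field K] (Δ : Set (Finset (Fin n))) (i : ℕ) : Prop :=
  ∀ z : Finset (Fin n) → K, (∀ F, z F ≠ 0 → F ∈ Δ ∧ F.card = i) → bd z = 0 →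
    ∃ y : Finset (Fin n) → K, (∀ F, y F ≠ 0 → F ∈ Δ ∧ F.card = i + 1) ∧ bd y = z

lemma bd_sub (z w : Finset (Fin n) → K) : bd (z - w) = bd z - bd w := by
  funext F; simp [bd, mul_sub]

lemma bd_add (z w : Finset (Fin n) → K) : bd (z + w) = bd z + bd w := by
  funext F; simp [bd, mul_add, Finset.sum_add_distrib]

lemma bd_supp {Δ : Set (Finset (Fin n))} (hΔ : ∀ F j, j ∉ F → insert j F ∈ Δ → F ∈ Δ) {i : ℕ}
    {y : Finset (Fin n) → K} (hy : ∀ F, y F ≠ 0 → F ∈ Δ ∧ F.card = i + 1) (F : Finset (Fin n))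
    (hF : bd y F ≠ 0) : F ∈ Δ ∧ F.card = i := by
  obtain ⟨j, hj, hne⟩ := Finset.exists_ne_zero_of_sum_ne_zero hF
  have hj' : j ∉ F := by simpa using hj
  obtain ⟨h1, h2⟩ := hy _ (right_ne_zero_of_mul hne)
  rw [Finset.card_insert_of_notMem hj'] at h2
  exact ⟨hΔ F j hj' h1, by omega⟩

/-- Acyclicity passes from `Δ'` to `Δ` if the faces of `Δ` outside `Δ'` are closed under adding
and removing a fixed vertex `u`: the relative complex is then contracted by the cone operator. -/
lemma Acyc.of_cone {Δ Δ' : Set (Finset (Fin n))} {i : ℕ} (hsub : Δ' ⊆ Δ)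
    (hΔ : ∀ F j, j ∉ F → insert j F ∈ Δ → F ∈ Δ) (hΔ' : ∀ F j, j ∉ F → insert j F ∈ Δ' → F ∈ Δ')
    (u : Fin n) (hu : ∀ F ∈ Δ \ Δ', insert u F ∈ Δ \ Δ' ∧ F.erase u ∈ Δ \ Δ')
    (h : Acyc K Δ' i) : Acyc K Δ i := by
  classical
  intro z hz hbz
  set zQ : Finset (Fin n) → K := fun F => if F ∈ Δ \ Δ' then z F else 0 with hzQ
  set y : Finset (Fin n) → K := cone u zQ with hy
  have hysupp : ∀ F, y F ≠ 0 → F ∈ Δ ∧ F.card = i + 1 := by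
    intro F hF
    by_cases huF : u ∈ F
    · simp only [hy, cone, huF, if_true] at hF
      have h1 := right_ne_zero_of_mul hF
      by_cases hQ : F.erase u ∈ Δ \ Δ'
      · simp only [hzQ, hQ, if_true] at h1
        have h2 := (hz _ h1).2
        have h3 := (hu _ hQ).1.1
        rw [Finset.insert_erase huF] at h3
        exact ⟨h3, by rw [← h2, Finset.card_erase_add_one huF]⟩
      · simp only [hzQ, hQ, if_false] at h1; exact absurd rfl h1
    · simp [hy, cone, huF] at hF
  -- `bd zQ = - bd (z - zQ)` is supported on `Δ'`
  have hbQ : ∀ F, F ∉ Δ' → bd zQ F = 0 := by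
    intro F hF
    have h1 : bd zQ = - bd (z - zQ) := by rw [bd_sub, hbz, zero_sub, neg_neg]
    rw [h1, Pi.neg_apply, neg_eq_zero]
    refine Finset.sum_eq_zero fun j hj => ?_
    have hj' : j ∉ F := by simpa using hj
    have h2 : insert j F ∉ Δ' := fun hmem => hF (hΔ' F j hj' hmem)
    have h3 : (z - zQ) (insert j F) = 0 := by
      by_cases h4 : insert j F ∈ Δ
      · simp [hzQ, h4, h2]
      · have h5 : z (insert j F) = 0 := by
          by_contra hne
          exact h4 (hz _ hne).1
        simp [hzQ, h5]
    rw [h3, mul_zero]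
  have hw : ∀ F, (z - bd y) F ≠ 0 → F ∈ Δ' ∧ F.card = i := by
    intro F hF
    have h1 : F ∈ Δ ∧ F.card = i := by
      by_cases hzF : z F = 0
      · refine bd_supp hΔ hysupp F fun hb => hF ?_
        simp [hzF, hb]
      · exact hz F hzF
    refine ⟨?_, h1.2⟩
    by_contra hF'
    have hQ : F ∈ Δ \ Δ' := ⟨h1.1, hF'⟩
    apply hF
    have h2 := bd_cone u zQ F
    have h3 : zQ F = z F := by simp only [hzQ, hQ, if_true]
    have h4 : cone u (bd zQ) F = 0 := by
      by_cases huF : u ∈ F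
      · simp [cone, hbQ _ (hu F hQ).2.2]
      · simp [cone, huF]
    rw [h3, h4, add_zero] at h2
    rw [Pi.sub_apply, hy, h2, sub_self]
  obtain ⟨y', hy', hby'⟩ := h (z - bd y) hw (by rw [bd_sub, hbz, bd_bd, sub_zero])
  refine ⟨y + y', fun F hF => ?_, by rw [bd_add, hby']; abel⟩
  by_cases hyF : y F = 0
  · have : y' F ≠ 0 := fun h0 => hF (by simp [hyF, h0])
    exact ⟨hsub (hy' F this).1, (hy' F this).2⟩
  · exact hysupp F hyF

lemma Acyc.of_card {Δ Δ' : Set (Finset (Fin n))} {i : ℕ} (hsub : Δ' ⊆ Δ)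
    (hcard : ∀ F ∈ Δ \ Δ', F.card ≠ i) (h : Acyc K Δ' i) : Acyc K Δ i := by
  intro z hz hbz
  obtain ⟨y, hy, hby⟩ := h z (fun F hF => by
    obtain ⟨h1, h2⟩ := hz F hF
    refine ⟨?_, h2⟩
    by_contra h3
    exact hcard F ⟨h1, h3⟩ h2) hbz
  exact ⟨y, fun F hF => ⟨hsub (hy F hF).1, (hy F hF).2⟩, hby⟩

end Koszul

/-! ### Acyclicity of the complexes attached to sums of edges -/

section Complex

set_option linter.unusedSectionVars false

variable {ι : Type} [Fintype ι] [LinearOrder ι] {n : ℕ} (x y : ι → Fin n)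

/-- The indicator vector of a subset. -/
def ind (F : Finset (Fin n)) (v : Fin n) : ℤ := if v ∈ F then 1 else 0

/-- The complex of the subsets `F` with `F ≤ dg α + b` coordinatewise for some `α ∈ T`. -/
def cx (T : Finset (Lex (ι → ℕ))) (b : Fin n → ℤ) : Set (Finset (Fin n)) :=
  {F | ∃ α ∈ T, ∀ v, ind F v ≤ dg x y (ofLex α) v + b v}

/-- The combinatorial form of linear quotients: each `α ∈ T` can be moved by one unit step towards
any larger `γ ∈ T`, with a larger result in `T`. -/
def Exch (T : Finset (Lex (ι → ℕ))) : Prop :=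
  ∀ α ∈ T, ∀ γ ∈ T, α < γ → ∃ β ∈ T, α < β ∧ ∃ i j,
    dg x y (ofLex β) = dg x y (ofLex α) - ev i + ev j ∧ dg x y (ofLex γ) i < dg x y (ofLex α) i

lemma ind_mono {F G : Finset (Fin n)} (h : F ⊆ G) (v : Fin n) : ind F v ≤ ind G v := by
  unfold ind
  by_cases hF : v ∈ F
  · simp [hF, h hF]
  · simp only [hF, if_false]; split_ifs <;> simp

lemma ind_nonneg (F : Finset (Fin n)) (v : Fin n) : 0 ≤ ind F v := by
  unfold ind; split_ifs <;> simp

lemma ind_le_one (F : Finset (Fin n)) (v : Fin n) : ind F v ≤ 1 := by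
  unfold ind; split_ifs <;> simp

lemma ind_of_ne {F G : Finset (Fin n)} {v : Fin n} (h : v ∈ F ↔ v ∈ G) : ind F v = ind G v := by
  simp [ind, h]

lemma sum_ind (F : Finset (Fin n)) : ∑ v, ind F v = F.card := by
  simp [ind]

lemma cx_down (T : Finset (Lex (ι → ℕ))) (b : Fin n → ℤ) (F : Finset (Fin n)) (j : Fin n)
    (_ : j ∉ F) (h : insert j F ∈ cx x y T b) : F ∈ cx x y T b := by
  obtain ⟨α, hα, h⟩ := h
  exact ⟨α, hα, fun v => (ind_mono (Finset.subset_insert j F) v).trans (h v)⟩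

/-- Adding the elements of `T` in decreasing order, each new part of the complex is either a cone
or a single face of the top degree `∑ b + 2 s`. -/
lemma acyc_cx (K : Type) [Field K] (b : Fin n → ℤ) (s i : ℕ) (hi : (i : ℤ) ≠ ∑ v, b v + 2 * s)
    (T : Finset (Lex (ι → ℕ))) (hs : ∀ α ∈ T, ∑ f, ofLex α f = s) (hT : Exch x y T) :
    Acyc K (cx x y T b) i := by
  induction T using Finset.induction_on_min with
  | empty =>
    intro z hz _
    refine ⟨0, by simp, ?_⟩
    funext F
    have : z F = 0 := by
      by_contra hF
      obtain ⟨⟨α, hα, -⟩, -⟩ := hz F hF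
      simp at hα
    rw [this]; simp [bd]
  | insert α T hα ih =>
    have ih' : Acyc K (cx x y T b) i := by
      refine ih (fun β hβ => hs β (Finset.mem_insert_of_mem hβ)) fun β hβ γ hγ hlt => ?_
      obtain ⟨δ, hδ, hβδ, h⟩ :=
        hT β (Finset.mem_insert_of_mem hβ) γ (Finset.mem_insert_of_mem hγ) hlt
      rcases Finset.mem_insert.1 hδ with rfl | hδ
      · exact absurd hβδ (hα β hβ).asymm
      · exact ⟨δ, hδ, hβδ, h⟩
    have hsub : cx x y T b ⊆ cx x y (insert α T) b := by
      rintro F ⟨β, hβ, h⟩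
      exact ⟨β, Finset.mem_insert_of_mem hβ, h⟩
    set c : Fin n → ℤ := fun v => dg x y (ofLex α) v + b v with hc
    -- the variables generating the colon ideal of the new generator
    set X : Set (Fin n) := {v | ∃ β ∈ T, ∃ j,
      dg x y (ofLex β) = dg x y (ofLex α) - ev v + ev j} with hX
    have hQ : ∀ F, F ∈ cx x y (insert α T) b \ cx x y T b ↔
        (∀ v, ind F v ≤ c v) ∧ ∀ v ∈ X, ind F v = c v := by
      intro F
      constructor
      · rintro ⟨⟨β, hβ, h⟩, hF⟩
        rcases Finset.mem_insert.1 hβ with rfl | hβ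
        swap
        · exact absurd ⟨β, hβ, h⟩ hF
        refine ⟨h, ?_⟩
        rintro v ⟨β', hβ', j, hd⟩
        by_contra hne
        refine hF ⟨β', hβ', fun w => ?_⟩
        have h1 : ind F w ≤ c w := h w
        have h2 : c w = dg x y (ofLex β) w + b w := rfl
        have h3 := congrFun hd w
        simp only [Pi.add_apply, Pi.sub_apply] at h3
        have h4 := ev_nonneg j w
        by_cases hwv : w = v
        · subst hwv
          have h5 := ev_self w
          have h6 : ind F w ≠ c w := hne
          omega
        · have h5 := ev_ne hwv
          omega
      · rintro ⟨h1, h2⟩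
        refine ⟨⟨α, Finset.mem_insert_self _ _, h1⟩, ?_⟩
        rintro ⟨γ, hγ, h⟩
        obtain ⟨β, hβ, hlt, i, j, hd, hi⟩ :=
          hT α (Finset.mem_insert_self _ _) γ (Finset.mem_insert_of_mem hγ) (hα γ hγ)
        have hβT : β ∈ T := by
          rcases Finset.mem_insert.1 hβ with rfl | hβ
          · exact absurd hlt (lt_irrefl _)
          · exact hβ
        have h3 := h2 i ⟨β, hβT, j, hd⟩
        have h4 := h i
        have h5 : c i = dg x y (ofLex α) i + b i := rfl
        omega
    by_cases hu : ∃ u, u ∉ X ∧ 1 ≤ c u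
    · obtain ⟨u, huX, hcu⟩ := hu
      refine Acyc.of_cone hsub (cx_down x y _ b) (cx_down x y _ b) u (fun F hF => ?_) ih'
      have h1 := (hQ F).1 hF
      constructor
      · refine (hQ _).2 ⟨fun v => ?_, fun v hv => ?_⟩
        · by_cases hvu : v = u
          · subst hvu; exact (ind_le_one _ _).trans hcu
          · rw [ind_of_ne (G := F) (by simp [hvu])]; exact h1.1 v
        · have hvu : v ≠ u := by rintro rfl; exact huX hv
          rw [ind_of_ne (G := F) (by simp [hvu])]; exact h1.2 v hv
      · refine (hQ _).2 ⟨fun v => ?_, fun v hv => ?_⟩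
        · exact (ind_mono (Finset.erase_subset _ _) v).trans (h1.1 v)
        · have hvu : v ≠ u := by rintro rfl; exact huX hv
          rw [ind_of_ne (G := F) (by simp [hvu])]; exact h1.2 v hv
    · push Not at hu
      refine Acyc.of_card hsub (fun F hF hcard => hi ?_) ih'
      have h1 := (hQ F).1 hF
      have h2 : ∀ v, ind F v = c v := by
        intro v
        by_cases hv : v ∈ X
        · exact h1.2 v hv
        · have := hu v hv; have := h1.1 v; have := ind_nonneg F v; omega
      rw [← hcard, ← sum_ind, Finset.sum_congr rfl fun v _ => h2 v, hc, Finset.sum_add_distrib,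
        sum_dg, hs α (Finset.mem_insert_self _ _)]
      ring

lemma better_iff (A B : ι → ℕ) : Better A B ↔ toLex A < toLex B := Iff.rfl

lemma dg_swap {α A B : ι → ℕ} (hA : A ≤ α) :
    dg x y (α - A + B) = dg x y α - (dg x y A - dg x y B) := by
  rw [dg_add, dg_sub x y hA]; abel

lemma better_swap {α A B : ι → ℕ} (hA : A ≤ α) (h : Better A B) : Better α (α - A + B) := by
  obtain ⟨k, h1, h2⟩ := h
  refine ⟨k, fun l hl => ?_, ?_⟩
  · have := h1 l hl
    have : A l ≤ α l := hA l
    simp only [Pi.add_apply, Pi.sub_apply]; omega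
  · have : A k ≤ α k := hA k
    simp only [Pi.add_apply, Pi.sub_apply]; omega

lemma sum_eq_of_dg {α β : ι → ℕ} (h : ∑ v, dg x y α v = ∑ v, dg x y β v) :
    ∑ f, α f = ∑ f, β f := by
  rw [sum_dg, sum_dg] at h; omega

/-- Every multiset of edges has a lexicographically largest one in its fibre. -/
lemma exists_std (α : ι → ℕ) :
    ∃ β, Std x y β ∧ dg x y β = dg x y α ∧ toLex α ≤ toLex β := by
  classical
  set Φ : Finset (Lex (ι → ℕ)) :=
    ((Finset.piAntidiag Finset.univ (∑ f, α f)).map (toLex (α := ι → ℕ)).toEmbedding).filter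
      fun β => dg x y (ofLex β) = dg x y α with hΦ
  have hmem : ∀ β : ι → ℕ, dg x y β = dg x y α → toLex β ∈ Φ := by
    intro β hβ
    have := sum_eq_of_dg x y (α := β) (β := α) (by rw [hβ])
    simp [hΦ, hβ, this]
  obtain ⟨β, hβ, hmax⟩ := Φ.exists_max_image id ⟨toLex α, hmem α rfl⟩
  have hdβ : dg x y (ofLex β) = dg x y α := (Finset.mem_filter.1 hβ).2
  refine ⟨ofLex β, ?_, hdβ, hmax _ (hmem α rfl)⟩
  intro A hA B hd hb
  have h1 := hmax _ (hmem (ofLex β - A + B) (by rw [dg_swap x y hA, hd, hdβ]; simp))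
  exact absurd ((better_iff _ _).1 (better_swap hA hb)) (not_lt.2 h1)

/-- The complex of all subsets bounded by a translate of a sum of `s` edges is acyclic outside the
top degree. -/
lemma acyc_sums (K : Type) [Field K]
    (hlow : ∀ f f₀ : ι, f₀ < f → ∃ g < f, ∃ p q r, dg x y (Pi.single f 1) = ev p + ev q ∧
      dg x y (Pi.single g 1) = ev p + ev r)
    (b : Fin n → ℤ) (s i : ℕ) (hi : (i : ℤ) ≠ ∑ v, b v + 2 * s) :
    Acyc K {F | ∃ α : ι → ℕ, ∑ f, α f = s ∧ ∀ v, ind F v ≤ dg x y α v + b v} i := by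
  classical
  set T : Finset (Lex (ι → ℕ)) :=
    ((Finset.piAntidiag Finset.univ s).map (toLex (α := ι → ℕ)).toEmbedding).filter
      fun β => Std x y (ofLex β) with hT
  have hmem : ∀ β : ι → ℕ, toLex β ∈ T ↔ ∑ f, β f = s ∧ Std x y β := by
    intro β; simp [hT]
  have hmem' : ∀ β : Lex (ι → ℕ), β ∈ T ↔ ∑ f, ofLex β f = s ∧ Std x y (ofLex β) :=
    fun β => hmem (ofLex β)
  have heq : {F | ∃ α : ι → ℕ, ∑ f, α f = s ∧ ∀ v, ind F v ≤ dg x y α v + b v} = cx x y T b := by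
    ext F
    constructor
    · rintro ⟨α, hα, h⟩
      obtain ⟨β, hβ, hd, -⟩ := exists_std x y α
      refine ⟨toLex β, (hmem β).2 ⟨?_, hβ⟩, fun v => ?_⟩
      · rw [sum_eq_of_dg x y (α := β) (β := α) (by rw [hd]), hα]
      · rw [ofLex_toLex, hd]; exact h v
    · rintro ⟨α, hα, h⟩
      exact ⟨ofLex α, ((hmem' α).1 hα).1, h⟩
  rw [heq]
  refine acyc_cx x y K b s i hi T (fun α hα => ((hmem' α).1 hα).1) ?_
  intro α hα γ hγ hlt
  obtain ⟨hsα, hstd⟩ := (hmem' α).1 hα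
  obtain ⟨hsγ, -⟩ := (hmem' γ).1 hγ
  obtain ⟨A, hA, B, i, j, hb, hd, hij⟩ :=
    improves_of_better x y (hsα.trans hsγ.symm) hlt hstd hlow
  obtain ⟨β, hβ, hdβ, hle⟩ := exists_std x y (ofLex α - A + B)
  have hdβ' : dg x y β = dg x y (ofLex α) - ev i + ev j := by
    rw [hdβ, dg_swap x y hA, hd]; abel
  refine ⟨toLex β, (hmem β).2 ⟨?_, hβ⟩, ?_, i, j, hdβ', hij⟩
  · rw [← hsα]
    refine sum_eq_of_dg x y ?_
    rw [hdβ']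
    simp [Finset.sum_add_distrib, sum_ev]
  · exact lt_of_lt_of_le ((better_iff _ _).1 (better_swap hA hb)) hle

end Complex

/-! ### An ordering of the edges of a connected graph -/

section Order

variable {n : ℕ}

/-- The distance from `r` to the first end plus the distance from `r` to the second end, refined
by the ends themselves so that distinct darts have distinct keys. -/
noncomputable def dartKey (H : SimpleGraph (Fin n)) (r : Fin n) (d : H.Dart) :
    ℕ ×ₗ Fin n ×ₗ Fin n :=
  toLex (H.dist d.fst r + H.dist d.snd r, toLex (d.fst, d.snd))

lemma dartKey_injective (H : SimpleGraph (Fin n)) (r : Fin n) :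
    Function.Injective (dartKey H r) := by
  intro d e h
  have h1 := congrArg (fun z => (ofLex (ofLex z).2)) h
  simp only [dartKey, ofLex_toLex, Prod.mk.injEq] at h1
  exact SimpleGraph.Dart.ext _ _ (Prod.ext h1.1 h1.2)

lemma dartKey_lt_of_dist {H : SimpleGraph (Fin n)} {r : Fin n} {d e : H.Dart}
    (h : H.dist d.fst r + H.dist d.snd r < H.dist e.fst r + H.dist e.snd r) :
    dartKey H r d < dartKey H r e :=
  Prod.Lex.toLex_lt_toLex.2 (Or.inl h)

lemma dist_le_of_dartKey_lt {H : SimpleGraph (Fin n)} {r : Fin n} {d e : H.Dart}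
    (h : dartKey H r d < dartKey H r e) :
    H.dist d.fst r + H.dist d.snd r ≤ H.dist e.fst r + H.dist e.snd r := by
  rcases Prod.Lex.toLex_lt_toLex.1 h with h | h
  · exact h.le
  · exact h.1.le

lemma exists_closer {H : SimpleGraph (Fin n)} {r v : Fin n} (h : H.Reachable v r) (hv : v ≠ r) :
    ∃ u, H.Adj v u ∧ H.dist u r < H.dist v r := by
  obtain ⟨p, hp⟩ := h.exists_walk_length_eq_dist
  cases p with
  | nil => exact absurd rfl hv
  | cons hadj p =>
    refine ⟨_, hadj, ?_⟩
    rw [SimpleGraph.Walk.length_cons] at hp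
    have := SimpleGraph.dist_le p
    omega

/-- When edges are ordered by their distance from `r`, each edge other than the first one meets an
earlier edge. -/
lemma exists_lower {H : SimpleGraph (Fin n)} {r : Fin n} (hr : ∀ u v, H.Adj u v → H.Reachable u r)
    (f f₀ : H.Dart) (hlt : dartKey H r f₀ < dartKey H r f) :
    ∃ g : H.Dart, dartKey H r g < dartKey H r f ∧ ∃ p q t : Fin n,
      ev f.fst + ev f.snd = ev p + ev q ∧ ev g.fst + ev g.snd = ev p + ev t := by
  by_cases hroot : f.fst = r ∨ f.snd = r
  · refine ⟨f₀, hlt, r, ?_⟩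
    have hle := dist_le_of_dartKey_lt hlt
    have hadj := f.adj
    have h1 : H.dist f.fst r + H.dist f.snd r ≤ 1 := by
      rcases hroot with h | h
      · rw [h] at hadj ⊢
        rw [SimpleGraph.dist_self, SimpleGraph.dist_comm, SimpleGraph.dist_eq_one_iff_adj.2 hadj]
      · rw [h] at hadj ⊢
        rw [SimpleGraph.dist_self, SimpleGraph.dist_eq_one_iff_adj.2 hadj]
    have h2 : f₀.fst = r ∨ f₀.snd = r := by
      have e1 := (hr _ _ f₀.adj).dist_eq_zero_iff
      have e2 := (hr _ _ f₀.adj.symm).dist_eq_zero_iff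
      rw [← e1, ← e2]; omega
    have h3 : ∀ d : H.Dart, d.fst = r ∨ d.snd = r →
        ∃ q, (ev d.fst + ev d.snd : Fin n → ℤ) = ev r + ev q := by
      rintro d (h | h)
      · exact ⟨d.snd, by rw [h]⟩
      · exact ⟨d.fst, by rw [h, add_comm]⟩
    obtain ⟨q, hq⟩ := h3 f hroot
    obtain ⟨t, ht⟩ := h3 f₀ h2
    exact ⟨q, t, hq, ht⟩
  · push Not at hroot
    rcases le_total (H.dist f.fst r) (H.dist f.snd r) with h | h
    · obtain ⟨u, hu, hlt'⟩ := exists_closer (hr _ _ f.adj) hroot.1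
      refine ⟨⟨(f.fst, u), hu⟩, dartKey_lt_of_dist ?_, f.fst, f.snd, u, rfl, rfl⟩
      exact Nat.add_lt_add_left (lt_of_lt_of_le hlt' h) _
    · obtain ⟨u, hu, hlt'⟩ := exists_closer (hr _ _ f.adj.symm) hroot.2
      refine ⟨⟨(f.snd, u), hu⟩, dartKey_lt_of_dist ?_, f.snd, f.fst, u, add_comm _ _, rfl⟩
      rw [add_comm (H.dist f.fst r)]
      exact Nat.add_lt_add_left (lt_of_lt_of_le hlt' h) _

end Order

/-! ### Monomials in powers of complementary edge ideals -/

section Ideals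

variable {K : Type} [Field K] {n : ℕ}

lemma expF_apply (F : Finset (Fin n)) (v : Fin n) : expF F v = if v ∈ F then 1 else 0 := by
  simp [expF, Finsupp.finsetSum_apply, Finsupp.single_apply]

lemma expF_cast (F : Finset (Fin n)) (v : Fin n) : (expF F v : ℤ) = ind F v := by
  rw [expF_apply, ind]; split_ifs <;> simp

/-- The `s`-th power of a monomial ideal is spanned by the `s`-fold products of generators. -/
lemma span_monomial_pow {ι : Type} [Fintype ι] [DecidableEq ι] (M : ι → Fin n →₀ ℕ) (s : ℕ) :
    (Ideal.span (Set.range fun f => (monomial (M f) (1 : K) : S K n))) ^ s =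
      Ideal.span ((fun m => (monomial m (1 : K) : S K n)) ''
        {m | ∃ α : ι → ℕ, ∑ f, α f = s ∧ m = ∑ f, α f • M f}) := by
  have hsingle : ∀ f, ∑ g, (Pi.single f 1 : ι → ℕ) g • M g = M f := by
    intro f
    rw [Finset.sum_eq_single f]
    · simp
    · intro b _ hb; simp [hb]
    · simp
  induction s with
  | zero =>
    rw [pow_zero, Ideal.one_eq_top, eq_comm, Ideal.eq_top_iff_one]
    refine Ideal.subset_span ⟨0, ⟨0, by simp, by simp⟩, rfl⟩
  | succ s ih =>
    rw [pow_succ, ih, Ideal.span_mul_span']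
    congr 1
    ext p
    constructor
    · rintro ⟨_, ⟨_, ⟨α, hα, rfl⟩, rfl⟩, _, ⟨f, rfl⟩, rfl⟩
      refine ⟨_, ⟨α + Pi.single f 1, ?_, rfl⟩, ?_⟩
      · simp [Finset.sum_add_distrib, hα]
      · simp only [monomial_mul, mul_one, Pi.add_apply, add_smul, Finset.sum_add_distrib]
        congr 2
        rw [hsingle f]
    · rintro ⟨_, ⟨α, hα, rfl⟩, rfl⟩
      obtain ⟨f, -, hf⟩ : ∃ f ∈ Finset.univ, α f ≠ 0 :=
        Finset.exists_ne_zero_of_sum_ne_zero (by rw [hα]; omega)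
      obtain ⟨β, rfl⟩ : ∃ β : ι → ℕ, α = β + Pi.single f 1 := by
        refine ⟨α - Pi.single f 1, ?_⟩
        funext g
        by_cases hg : g = f
        · subst hg; simp; omega
        · simp [hg]
      refine ⟨_, ⟨_, ⟨β, ?_, rfl⟩, rfl⟩, _, ⟨f, rfl⟩, ?_⟩
      · simpa [Finset.sum_add_distrib] using hα
      · simp only [monomial_mul, mul_one, Pi.add_apply, add_smul, Finset.sum_add_distrib]
        congr 2
        rw [hsingle f]

/-- The exponent vector of the generator `x_{V(H)} / (x_i x_j)`. -/
noncomputable def genExp (VH : Finset (Fin n)) {H : SimpleGraph (Fin n)} (d : H.Dart) :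
    Fin n →₀ ℕ :=
  expF VH - Finsupp.single d.fst 1 - Finsupp.single d.snd 1

lemma compIdealOn_eq (VH : Finset (Fin n)) (H : SimpleGraph (Fin n)) :
    compIdealOn (K := K) VH H =
      Ideal.span (Set.range fun d : H.Dart => (monomial (genExp VH d) (1 : K) : S K n)) := by
  rw [compIdealOn]
  congr 1
  ext p
  constructor
  · rintro ⟨i, j, h, rfl⟩
    exact ⟨⟨(i, j), h⟩, rfl⟩
  · rintro ⟨d, rfl⟩
    exact ⟨d.fst, d.snd, d.adj, rfl⟩

lemma genExp_cast {VH : Finset (Fin n)} {H : SimpleGraph (Fin n)}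
    (hHV : ∀ i j, H.Adj i j → i ∈ VH ∧ j ∈ VH) (d : H.Dart) (v : Fin n) :
    (genExp VH d v : ℤ) = ind VH v - (ev d.fst v + ev d.snd v) := by
  obtain ⟨h1, h2⟩ := hHV _ _ d.adj
  have hne : d.fst ≠ d.snd := d.adj.ne
  simp only [genExp, Finsupp.tsub_apply, Finsupp.single_apply, expF_apply, ind, ev,
    Pi.single_apply]
  by_cases hv1 : v = d.fst
  · have : v ≠ d.snd := fun h => hne (hv1.symm.trans h)
    simp [hv1, h1, hne, hne.symm]
  · by_cases hv2 : v = d.snd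
    · simp [hv2, h2, hne, hne.symm]
    · simp only [hv1, hv2, Ne.symm hv1, Ne.symm hv2, if_false]
      split_ifs <;> simp

lemma sum_genExp_cast {VH : Finset (Fin n)} {H : SimpleGraph (Fin n)} [Fintype H.Dart]
    (hHV : ∀ i j, H.Adj i j → i ∈ VH ∧ j ∈ VH) (α : H.Dart → ℕ) (v : Fin n) :
    (((∑ d, α d • genExp VH d : Fin n →₀ ℕ) v : ℕ) : ℤ) =
      (∑ d, α d : ℕ) * ind VH v - dg (fun d : H.Dart => d.fst) (fun d => d.snd) α v := by
  rw [dg_apply, Finsupp.finsetSum_apply]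
  push_cast
  rw [Finset.sum_mul, ← Finset.sum_sub_distrib]
  refine Finset.sum_congr rfl fun d _ => ?_
  rw [Pi.smul_apply, smul_eq_mul]
  push_cast
  rw [genExp_cast hHV]; ring

lemma monomial_mem_pow {VH : Finset (Fin n)} {H : SimpleGraph (Fin n)} [Fintype H.Dart]
    (hHV : ∀ i j, H.Adj i j → i ∈ VH ∧ j ∈ VH) (s : ℕ) (c : Fin n →₀ ℕ) :
    (monomial c (1 : K) : S K n) ∈ compIdealOn (K := K) VH H ^ s ↔
      ∃ α : H.Dart → ℕ, ∑ d, α d = s ∧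
        ∀ v, s * ind VH v - dg (fun d : H.Dart => d.fst) (fun d => d.snd) α v ≤ c v := by
  classical
  rw [compIdealOn_eq, span_monomial_pow, mem_ideal_span_monomial_image]
  have hsupp : (monomial c (1 : K) : S K n).support = {c} := by
    rw [support_monomial, if_neg one_ne_zero]
  rw [hsupp]
  simp only [Finset.mem_singleton, forall_eq]
  constructor
  · rintro ⟨_, ⟨α, hα, rfl⟩, hle⟩
    refine ⟨α, hα, fun v => ?_⟩
    have h1 := sum_genExp_cast hHV α v
    rw [hα] at h1
    rw [← h1]
    exact_mod_cast hle v
  · rintro ⟨α, hα, hle⟩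
    refine ⟨_, ⟨α, hα, rfl⟩, fun v => ?_⟩
    have h1 := sum_genExp_cast hHV α v
    have h2 := hle v
    rw [hα] at h1
    rw [← h1] at h2
    exact_mod_cast h2

/-- The Koszul basis in multidegree `a` is a complex of the kind treated by `acyc_sums`. -/
lemma koszul_basis_iff {VH : Finset (Fin n)} {H : SimpleGraph (Fin n)} [Fintype H.Dart]
    (hHV : ∀ i j, H.Adj i j → i ∈ VH ∧ j ∈ VH) (s : ℕ) (a : Fin n →₀ ℕ) (F : Finset (Fin n)) :
    (expF F ≤ a ∧ (monomial (a - expF F) (1 : K) : S K n) ∈ compIdealOn (K := K) VH H ^ s) ↔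
      ∃ α : H.Dart → ℕ, ∑ d, α d = s ∧ ∀ v, ind F v ≤
        dg (fun d : H.Dart => d.fst) (fun d => d.snd) α v + ((a v : ℤ) - s * ind VH v) := by
  rw [monomial_mem_pow hHV]
  constructor
  · rintro ⟨hle, α, hα, h⟩
    refine ⟨α, hα, fun v => ?_⟩
    have h1 := h v
    have h2 := hle v
    rw [Finsupp.tsub_apply, Nat.cast_sub h2, expF_cast] at h1
    linarith
  · rintro ⟨α, hα, h⟩
    have hle : expF F ≤ a := by
      intro v
      have h1 := sum_genExp_cast hHV α v
      have h2 := h v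
      rw [hα] at h1
      have h3 : (expF F v : ℤ) ≤ a v := by
        rw [expF_cast]
        have : (0 : ℤ) ≤ (((∑ d, α d • genExp VH d : Fin n →₀ ℕ) v : ℕ) : ℤ) := by positivity
        linarith
      exact_mod_cast h3
    refine ⟨hle, α, hα, fun v => ?_⟩
    rw [Finsupp.tsub_apply, Nat.cast_sub (hle v), expF_cast]
    linarith [h v]

end Ideals

/-! ### Koszul homology and the linear strand -/

section Homology

variable {K : Type} [Field K] {n : ℕ} {I J : Ideal (S K n)} {a : Fin n →₀ ℕ} {i : ℕ}

/-- A Koszul chain as a function on all subsets, extended by zero. -/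
noncomputable def toFun (z : KB I a i →₀ K) : Finset (Fin n) → K :=
  fun F => Finsupp.mapDomain Subtype.val z F

lemma toFun_apply (z : KB I a i →₀ K) (F : KB I a i) : toFun z F.1 = z F :=
  Finsupp.mapDomain_apply Subtype.val_injective z F

lemma toFun_ne_zero {z : KB I a i →₀ K} {F : Finset (Fin n)} (h : toFun z F ≠ 0) :
    F.card = i ∧ expF F ≤ a ∧ (monomial (a - expF F) (1 : K) : S K n) ∈ I := by
  by_contra hF
  refine h (Finsupp.mapDomain_of_notMem_range z F ?_)
  rintro ⟨G, rfl⟩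
  exact hF G.2

lemma toFun_injective : Function.Injective (toFun : (KB I a i →₀ K) → _) := by
  intro z w h
  ext F
  rw [← toFun_apply, ← toFun_apply, h]

lemma toFun_zero : toFun (0 : KB I a i →₀ K) = 0 := by
  funext F; simp [toFun]

lemma exists_toFun_eq (y : Finset (Fin n) → K) (hy : ∀ F, y F ≠ 0 →
      F.card = i ∧ expF F ≤ a ∧ (monomial (a - expF F) (1 : K) : S K n) ∈ I) :
    ∃ z : KB I a i →₀ K, toFun z = y := by
  refine ⟨Finsupp.equivFunOnFinite.symm fun F => y F.1, ?_⟩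
  funext F
  by_cases hF : F.card = i ∧ expF F ≤ a ∧ (monomial (a - expF F) (1 : K) : S K n) ∈ I
  · exact toFun_apply _ (⟨F, hF⟩ : KB I a i)
  · have h1 : y F = 0 := by
      by_contra h; exact hF (hy F h)
    rw [h1]
    by_contra h
    exact hF (toFun_ne_zero h)

lemma toFun_kd (z : KB I a (i + 1) →₀ K) : toFun (kd I a i z) = bd (toFun z) := by
  classical
  induction z using Finsupp.induction_linear with
  | zero => funext F; simp [toFun, bd]
  | add z w hz hw =>
    have hadd : ∀ {l : ℕ} (z w : KB I a l →₀ K), toFun (z + w) = toFun z + toFun w := by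
      intro l z w; funext F; simp [toFun, Finsupp.mapDomain_add]
    rw [map_add, hadd, hz, hw, hadd, bd_add]
  | single F c =>
    funext G
    simp only [toFun, bd, kd, Finsupp.lsum_single, LinearMap.toSpanSingleton_apply,
      Finsupp.mapDomain_single, Finsupp.mapDomain_smul, Finsupp.mapDomain_finsetSum,
      Finsupp.smul_apply, Finsupp.finsetSum_apply, Finsupp.single_apply, smul_eq_mul]
    rw [Finset.sum_attach F.1 (fun j => (-1 : K) ^ ((F.1.filter (fun x => x < j)).card) *
      if F.1.erase j = G then 1 else 0), Finset.mul_sum]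
    rw [← Finset.univ_inter F.1, ← Finset.sum_ite_mem, ← Finset.univ_inter Gᶜ, ← Finset.sum_ite_mem,
      Finset.univ_inter]
    refine Finset.sum_congr rfl fun j _ => ?_
    by_cases hj : j ∈ G
    · have h1 : F.1.erase j ≠ G := by
        rintro rfl; simp at hj
      simp [hj, h1]
    · by_cases hF : F.1 = insert j G
      · rw [hF, Finset.erase_insert hj]
        have h2 := sg_insert_of_not_lt (K := K) (F := G) (lt_irrefl j)
        rw [sg] at h2
        simp [hj, h2, mul_comm]
      · have h1 : j ∈ F.1 → F.1.erase j ≠ G := by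
          rintro hjF rfl; exact hF (Finset.insert_erase hjF).symm
        by_cases hjF : j ∈ F.1
        · simp [hF, h1 hjF]
        · simp [hF, hjF]

lemma nontrivial_Hmod_iff :
    Nontrivial (Hmod I a i) ↔ ∃ z, kdOut I a i z = 0 ∧ z ∉ LinearMap.range (kd I a i) := by
  rw [Submodule.nontrivial_iff_ne_bot, Ne, ← LinearMap.le_ker_iff_map, Submodule.ker_mkQ,
    SetLike.not_le_iff_exists]
  rfl

lemma kdOut_eq_zero_iff (z : KB I a i →₀ K) : kdOut I a i z = 0 ↔ bd (toFun z) = 0 := by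
  cases i with
  | zero =>
    refine ⟨fun _ => ?_, fun _ => rfl⟩
    funext F
    refine Finset.sum_eq_zero fun j _ => ?_
    by_contra h
    have h1 := (toFun_ne_zero (right_ne_zero_of_mul h)).1
    exact absurd (Finset.card_eq_zero.1 h1) (Finset.insert_ne_empty _ _)
  | succ i =>
    rw [← toFun_kd]
    refine ⟨fun h => ?_, fun h => toFun_injective ?_⟩
    · have h' : kd I a i z = 0 := h
      rw [h', toFun_zero]
    · exact h.trans toFun_zero.symm

/-- Powers of the complementary edge ideal of a connected graph have linear resolutions. -/
lemma linear_of_nontrivial {VH : Finset (Fin n)} {H : SimpleGraph (Fin n)}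
    (hHV : ∀ i j, H.Adj i j → i ∈ VH ∧ j ∈ VH)
    (hHconn : (H.induce (VH : Set (Fin n))).Connected) {s : ℕ}
    (h : Nontrivial (Hmod (compIdealOn (K := K) VH H ^ s) a i)) :
    (i : ℤ) = ∑ v, ((a v : ℤ) - s * ind VH v) + 2 * s := by
  classical
  by_contra hi
  obtain ⟨r⟩ := hHconn.nonempty
  have hr : ∀ u v, H.Adj u v → H.Reachable u r.1 := by
    intro u v huv
    exact (hHconn.preconnected ⟨u, (hHV u v huv).1⟩ r).map (SimpleGraph.Embedding.induce _).toHom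
  let _ : LinearOrder H.Dart := LinearOrder.lift' (dartKey H r.1) (dartKey_injective H r.1)
  have hac := acyc_sums (fun d : H.Dart => d.fst) (fun d => d.snd) K (fun f f₀ hlt => by
    obtain ⟨g, hg, p, q, t, h1, h2⟩ := exists_lower hr f f₀ hlt
    exact ⟨g, hg, p, q, t, by rw [dg_single, h1], by rw [dg_single, h2]⟩)
    (fun v => (a v : ℤ) - s * ind VH v) s i hi
  obtain ⟨z, hz, hzr⟩ := nontrivial_Hmod_iff.1 h
  obtain ⟨y, hy, hby⟩ := hac (toFun z) (fun F hF => by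
    obtain ⟨h1, h2⟩ := toFun_ne_zero hF
    exact ⟨(koszul_basis_iff hHV s a F).1 h2, h1⟩) ((kdOut_eq_zero_iff z).1 hz)
  obtain ⟨w, rfl⟩ := exists_toFun_eq (I := compIdealOn (K := K) VH H ^ s) (a := a) (i := i + 1) y
    (fun F hF => ⟨(hy F hF).2, (koszul_basis_iff hHV s a F).2 (hy F hF).1⟩)
  exact hzr ⟨w, toFun_injective (by rw [toFun_kd, hby])⟩

/-- A Koszul cycle for `J` stays a cycle for `I` after multiplication by a monomial that carries
`J` into `I`, and it is not a boundary if the Koszul complex of `I` vanishes one degree higher. -/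
lemma nontrivial_of_shift (u : Fin n →₀ ℕ)
    (hJI : ∀ c, (monomial c (1 : K) : S K n) ∈ J → (monomial (c + u) (1 : K) : S K n) ∈ I)
    (hempty : IsEmpty (KB I (a + u) (i + 1))) (h : Nontrivial (Hmod J a i)) :
    Nontrivial (Hmod I (a + u) i) := by
  obtain ⟨z, hz, hzr⟩ := nontrivial_Hmod_iff.1 h
  have hz0 : z ≠ 0 := by
    rintro rfl; exact hzr (Submodule.zero_mem _)
  obtain ⟨w, hw⟩ := exists_toFun_eq (I := I) (a := a + u) (i := i) (toFun z) (fun F hF => by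
    obtain ⟨h1, h2, h3⟩ := toFun_ne_zero hF
    refine ⟨h1, h2.trans (by simp), ?_⟩
    rw [tsub_add_eq_add_tsub h2 |>.symm]
    exact hJI _ h3)
  refine nontrivial_Hmod_iff.2 ⟨w, ?_, ?_⟩
  · rw [kdOut_eq_zero_iff, hw, ← kdOut_eq_zero_iff, hz]
  · rintro ⟨t, ht⟩
    have ht0 : t = 0 := Subsingleton.elim _ _
    rw [ht0, map_zero] at ht
    rw [← ht, toFun_zero, ← toFun_zero (I := J) (a := a) (i := i)] at hw
    exact hz0 (toFun_injective hw).symm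

end Homology

/-! ### Passage from the subgraph to the graph -/

section Subgraph

variable {K : Type} [Field K] {n : ℕ}

lemma monomial_shift_mem {G H : SimpleGraph (Fin n)} {VH : Finset (Fin n)} (hHG : H ≤ G)
    (hHV : ∀ i j, H.Adj i j → i ∈ VH ∧ j ∈ VH) (s : ℕ) (c : Fin n →₀ ℕ)
    (hc : (monomial c (1 : K) : S K n) ∈ compIdealOn (K := K) VH H ^ s) :
    (monomial (c + s • expF (Finset.univ \ VH)) (1 : K) : S K n) ∈ compIdeal K n G ^ s := by
  have hle : Ideal.span {(monomial (expF (Finset.univ \ VH)) (1 : K) : S K n)} *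
      compIdealOn (K := K) VH H ≤ compIdeal K n G := by
    rw [compIdealOn, Ideal.span_mul_span', Ideal.span_le]
    rintro _ ⟨_, rfl, _, ⟨i, j, hij, rfl⟩, rfl⟩
    refine Ideal.subset_span ⟨i, j, hHG hij, ?_⟩
    obtain ⟨h1, h2⟩ := hHV i j hij
    have hne := hij.ne
    simp only [monomial_mul, mul_one]
    refine congrArg (fun m => (monomial m (1 : K) : S K n)) ?_
    ext v
    simp only [aexp, Finsupp.add_apply, Finsupp.tsub_apply, Finsupp.single_apply, expF_apply,
      Finset.mem_sdiff, Finset.mem_univ, true_and, if_true]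
    by_cases hv : v ∈ VH
    · simp [hv]
    · have hvi : i ≠ v := by rintro rfl; exact hv h1
      have hvj : j ≠ v := by rintro rfl; exact hv h2
      simp [hv, hvi, hvj]
  have h1 := Ideal.pow_right_mono hle s
  rw [mul_pow] at h1
  have h2 : (monomial (s • expF (Finset.univ \ VH)) (1 : K) : S K n) ∈
      Ideal.span {(monomial (expF (Finset.univ \ VH)) (1 : K) : S K n)} ^ s := by
    have := Ideal.pow_mem_pow (Ideal.mem_span_singleton_self
      (monomial (expF (Finset.univ \ VH)) (1 : K) : S K n)) s
    rwa [monomial_pow, one_pow] at this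
  have h3 := h1 (Ideal.mul_mem_mul h2 hc)
  rwa [monomial_mul, mul_one, add_comm] at h3

/-- If `Tor_i(K, I_c(H)^s)` is nonzero in multidegree `a`, then `Tor_i(K, I_c(G)^s)` is nonzero in
the multidegree of `x^a u^s`, where `u` is the product of the variables outside `V(H)`. -/
lemma nontrivial_subgraph {G H : SimpleGraph (Fin n)} {VH : Finset (Fin n)} (hHG : H ≤ G)
    (hHV : ∀ i j, H.Adj i j → i ∈ VH ∧ j ∈ VH)
    (hHconn : (H.induce (VH : Set (Fin n))).Connected) (i s : ℕ) (a : Fin n →₀ ℕ)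
    (h : Nontrivial (Hmod (compIdealOn (K := K) VH H ^ s) a i)) :
    Nontrivial (Hmod (compIdeal K n G ^ s) (a + s • expF (Finset.univ \ VH)) i) := by
  classical
  have hlin := linear_of_nontrivial hHV hHconn h
  refine nontrivial_of_shift _ (monomial_shift_mem hHG hHV s) ⟨?_⟩ h
  rintro ⟨F, hcard, hF⟩
  -- a face of degree `i + 1` would give an element of `I_c(G)^s` of degree `(n - 2) s - 1`
  have hF' := (koszul_basis_iff (K := K) (VH := Finset.univ) (H := G)
    (fun _ _ _ => ⟨Finset.mem_univ _, Finset.mem_univ _⟩) s _ F).1 hF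
  obtain ⟨α, hα, hle⟩ := hF'
  have hsum := Finset.sum_le_sum fun v (_ : v ∈ Finset.univ) => hle v
  rw [Finset.sum_add_distrib, sum_dg, hα, sum_ind, hcard] at hsum
  have heq : ∀ v, (((a + s • expF (Finset.univ \ VH)) v : ℕ) : ℤ) - s * ind Finset.univ v =
      (a v : ℤ) - s * ind VH v := by
    intro v
    simp only [Finsupp.add_apply, Finsupp.smul_apply, smul_eq_mul, Nat.cast_add, Nat.cast_mul,
      expF_cast, ind, Finset.mem_sdiff, Finset.mem_univ, true_and, if_true]
    by_cases hv : v ∈ VH <;> simp [hv]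
  rw [Finset.sum_congr rfl fun v _ => heq v] at hsum
  push_cast at hsum
  omega

end Subgraph

/-- For a connected subgraph `H` (with vertex set `VH`) of a
connected graph `G` and `u = ∏_{i ∈ V(G) \ V(H)} x_i`, one has
`u^s · HS_i(I_c(H)^s) ⊆ HS_i(I_c(G)^s)` for all `i, s ≥ 1`; in particular
`pd(I_c(H)^s) ≤ pd(I_c(G)^s)`. -/
theorem hs_compIdeal_subgraph_le
    (K : Type) [Field K] (n : ℕ) (G H : SimpleGraph (Fin n))
    (VH : Finset (Fin n)) (hconn : G.Connected) (hHG : H ≤ G)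
    (hHV : ∀ i j, H.Adj i j → i ∈ VH ∧ j ∈ VH)
    (hHconn : (H.induce (VH : Set (Fin n))).Connected) :
    ∀ i : ℕ, 1 ≤ i → ∀ s : ℕ, 1 ≤ s →
      Ideal.span {(monomial (s • expF (Finset.univ \ VH)) 1 : S K n)} *
          HSIdeal i (compIdealOn (K := K) VH H ^ s) ≤
        HSIdeal i (compIdeal K n G ^ s) ∧
      pdim (compIdealOn (K := K) VH H ^ s) ≤ pdim (compIdeal K n G ^ s) := by
  intro i _ s _
  constructor
  · rw [HSIdeal, Ideal.span_mul_span', Ideal.span_le]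
    rintro _ ⟨_, rfl, _, ⟨a, ha, rfl⟩, rfl⟩
    refine Ideal.subset_span ⟨_, nontrivial_subgraph hHG hHV hHconn i s a ha, ?_⟩
    simp only [monomial_mul, mul_one]
    rw [add_comm]
  · rw [pdim, pdim]
    rcases Set.eq_empty_or_nonempty
      {i | ∃ a, Nontrivial (Hmod (compIdealOn (K := K) VH H ^ s) a i)} with he | hne
    · rw [he]; simp
    · refine csSup_le_csSup ?_ hne ?_
      · -- there are no subsets of `[n]` with more than `n` elements
        refine ⟨n, ?_⟩
        rintro k ⟨a, ha⟩
        obtain ⟨z, -, hz⟩ := nontrivial_Hmod_iff.1 ha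
        have hz0 : z ≠ 0 := by
          rintro rfl; exact hz (Submodule.zero_mem _)
        obtain ⟨F, -⟩ := Finsupp.ne_iff.1 hz0
        rw [← F.2.1]
        exact (Finset.card_le_univ _).trans (by simp)
      · rintro k ⟨a, ha⟩
        exact ⟨_, nontrivial_subgraph hHG hHV hHconn k s a ha⟩

end Paper
end
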